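/- arXiv:2605.20122 — 2 statements merged into one kernel-verified Lean document; each statement's English description precedes it below -/
import Mathlib

section
/- Let d ≥ 1 be an integer, let P and Q be (α,C)-controlled probability measures on (0,1)^d for some C > 1 and 0 < α < 1, and suppose W₂(P,Q) > ε for some ε > 0. Then there exists a constant K > 0, depending only on d, C and α, such that for every h > 0 with 1/h a positive integer, |W₂(G_h # P, G_h # Q) − W₂(P, Q)| ≤ K·h^{1+α}/ε. -/
open MeasureTheory
open scoped ENNReal RealInnerProductSpace

noncomputable section

abbrev Euc (d : ℕ) := EuclideanSpace ℝ (Fin d)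

/-- The open unit cube `(0,1)^d`. -/
def unitCube (d : ℕ) : Set (Euc d) := {x | ∀ i, x i ∈ Set.Ioo (0 : ℝ) 1}

/-- `G_h` : map each point to the center of the axis-aligned grid cell
(of side length `h`) containing it. -/
def gridSnap (d : ℕ) (h : ℝ) (x : Euc d) : Euc d :=
  (EuclideanSpace.equiv (Fin d) ℝ).symm fun i => h * ⌊x i / h⌋ + h / 2

/-- Couplings of two Borel (probability) measures: probability measures on
the product with the prescribed marginals. -/
def Couplings {d : ℕ} (P Q : Measure (Euc d)) : Set (Measure (Euc d × Euc d)) :=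
  {γ | IsProbabilityMeasure γ ∧ γ.map Prod.fst = P ∧ γ.map Prod.snd = Q}

/-- Squared 2-Wasserstein distance. -/
def W2sq {d : ℕ} (P Q : Measure (Euc d)) : ℝ :=
  sInf {r | ∃ γ ∈ Couplings P Q, r = ∫ p, ‖p.1 - p.2‖ ^ 2 ∂γ}

/-- 2-Wasserstein distance. -/
def W2 {d : ℕ} (P Q : Measure (Euc d)) : ℝ := Real.sqrt (W2sq P Q)

/-- `P` and `Q` are `(α, C)`-controlled probability measures on `(0,1)^d`:
they possess densities `μ, ν` w.r.t. Lebesgue measure on `(0,1)^d` whose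
`α`-Hölder seminorms sum to at most `C`, and which are bounded between
`C⁻¹` and `C`. -/
def IsControlled (d : ℕ) (α C : ℝ) (P Q : Measure (Euc d)) : Prop :=
  ∃ μ ν : Euc d → ℝ,
    P = (volume.restrict (unitCube d)).withDensity (fun x => ENNReal.ofReal (μ x)) ∧
    Q = (volume.restrict (unitCube d)).withDensity (fun x => ENNReal.ofReal (ν x)) ∧
    (∃ Cμ Cν : ℝ, 0 ≤ Cμ ∧ 0 ≤ Cν ∧ Cμ + Cν ≤ C ∧
      (∀ x ∈ unitCube d, ∀ y ∈ unitCube d, |μ x - μ y| ≤ Cμ * ‖x - y‖ ^ α) ∧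
      (∀ x ∈ unitCube d, ∀ y ∈ unitCube d, |ν x - ν y| ≤ Cν * ‖x - y‖ ^ α)) ∧
    (∀ x ∈ unitCube d, C⁻¹ ≤ μ x ∧ μ x ≤ C) ∧
    (∀ x ∈ unitCube d, C⁻¹ ≤ ν x ∧ ν x ≤ C)


section Duality

variable {X : Type*} [MetricSpace X] [CompactSpace X] [MeasurableSpace X]

/-- Values of the dual transport functional on pairs of continuous functions
whose direct sum dominates `f`. -/
def dualValues (P Q : Measure X) (f : C(X × X, ℝ)) : Set ℝ :=
  {r | ∃ φ ψ : C(X, ℝ), (∀ x y, f (x, y) ≤ φ x + ψ y) ∧ r = ∫ x, φ x ∂P + ∫ y, ψ y ∂Q}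

lemma nonempty_dualValues (P Q : Measure X) (f : C(X × X, ℝ)) : (dualValues P Q f).Nonempty :=
  ⟨_, ContinuousMap.const X ‖f‖, 0, fun x y => by
    simpa using (abs_le.1 (f.norm_coe_le_norm (x, y))).2, rfl⟩

variable [BorelSpace X]

lemma integrable_continuousMap (P : Measure X) [IsFiniteMeasure P] (φ : C(X, ℝ)) :
    Integrable φ P :=
  φ.continuous.integrable_of_hasCompactSupport (HasCompactSupport.of_compactSpace _)

variable (P Q : Measure X) [IsProbabilityMeasure P] [IsProbabilityMeasure Q]

lemma le_of_mem_dualValues {f : C(X × X, ℝ)} {a r : ℝ} (ha : ∀ p, a ≤ f p)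
    (hr : r ∈ dualValues P Q f) : a ≤ r := by
  obtain ⟨φ, ψ, h, rfl⟩ := hr
  have h1 : ∀ y, a ≤ ∫ x, φ x ∂P + ψ y := by
    intro y
    have : ∫ x, (a - ψ y) ∂P ≤ ∫ x, φ x ∂P :=
      integral_mono (integrable_const _) (integrable_continuousMap P φ) fun x => by
        have := h x y
        have := ha (x, y)
        simp only; linarith
    simp at this
    linarith
  have : ∫ y, (a - ∫ x, φ x ∂P) ∂Q ≤ ∫ y, ψ y ∂Q :=
    integral_mono (integrable_const _) (integrable_continuousMap Q ψ) fun y => by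
      have := h1 y
      simp only; linarith
  simp at this
  linarith

lemma bddBelow_dualValues (f : C(X × X, ℝ)) : BddBelow (dualValues P Q f) :=
  ⟨-‖f‖, fun _ hr => le_of_mem_dualValues P Q
    (fun p => (abs_le.1 (f.norm_coe_le_norm p)).1) hr⟩

lemma csInf_dualValues_le {f : C(X × X, ℝ)} (φ ψ : C(X, ℝ))
    (h : ∀ x y, f (x, y) ≤ φ x + ψ y) :
    sInf (dualValues P Q f) ≤ ∫ x, φ x ∂P + ∫ y, ψ y ∂Q :=
  csInf_le (bddBelow_dualValues P Q f) ⟨φ, ψ, h, rfl⟩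

lemma csInf_dualValues_add_le (f g : C(X × X, ℝ)) :
    sInf (dualValues P Q (f + g)) ≤ sInf (dualValues P Q f) + sInf (dualValues P Q g) := by
  refine le_of_forall_pos_le_add fun δ hδ => ?_
  obtain ⟨_, ⟨φ, ψ, h, rfl⟩, hr⟩ := exists_lt_of_csInf_lt (nonempty_dualValues P Q f)
    (lt_add_of_pos_right _ (half_pos hδ))
  obtain ⟨_, ⟨φ', ψ', h', rfl⟩, hr'⟩ := exists_lt_of_csInf_lt (nonempty_dualValues P Q g)
    (lt_add_of_pos_right _ (half_pos hδ))
  have := csInf_dualValues_le P Q (f := f + g) (φ + φ') (ψ + ψ') fun x y => by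
    have := h x y
    have := h' x y
    simp; linarith
  simp only [ContinuousMap.add_apply] at this
  rw [integral_add (integrable_continuousMap P φ) (integrable_continuousMap P φ'),
    integral_add (integrable_continuousMap Q ψ) (integrable_continuousMap Q ψ')] at this
  linarith

lemma csInf_dualValues_smul_le {c : ℝ} (hc : 0 < c) (f : C(X × X, ℝ)) :
    sInf (dualValues P Q (c • f)) ≤ c * sInf (dualValues P Q f) := by
  rw [← div_le_iff₀' hc]
  refine le_csInf (nonempty_dualValues P Q f) ?_
  rintro _ ⟨φ, ψ, h, rfl⟩
  rw [div_le_iff₀' hc]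
  have := csInf_dualValues_le P Q (f := c • f) (c • φ) (c • ψ) fun x y => by
    have := mul_le_mul_of_nonneg_left (h x y) hc.le
    simp; linarith
  simp only [ContinuousMap.smul_apply, smul_eq_mul, integral_const_mul] at this
  linarith

lemma csInf_dualValues_smul {c : ℝ} (hc : 0 < c) (f : C(X × X, ℝ)) :
    sInf (dualValues P Q (c • f)) = c * sInf (dualValues P Q f) := by
  refine le_antisymm (csInf_dualValues_smul_le P Q hc f) ?_
  have := csInf_dualValues_smul_le P Q (inv_pos.2 hc) (c • f)
  rw [inv_smul_smul₀ hc.ne', ← div_eq_inv_mul, le_div_iff₀' hc] at this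
  exact this

lemma csInf_dualValues_zero : sInf (dualValues P Q 0) = 0 := by
  have := csInf_dualValues_smul P Q (c := 2) (by norm_num) 0
  rw [smul_zero] at this
  linarith

/-- Hahn–Banach: the dual value of `f` is attained by a linear functional. -/
lemma exists_linearMap_le_csInf_dualValues (f : C(X × X, ℝ)) :
    ∃ Λ : C(X × X, ℝ) →ₗ[ℝ] ℝ, Λ f = sInf (dualValues P Q f) ∧
      ∀ g, Λ g ≤ sInf (dualValues P Q g) := by
  set N : C(X × X, ℝ) → ℝ := fun g => sInf (dualValues P Q g) with hN
  have H : ∀ c : ℝ, c • f = 0 → RingHom.id ℝ c • N f = 0 := by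
    intro c hc
    rcases smul_eq_zero.1 hc with h | h
    · simp [h]
    · simp [h, hN, csInf_dualValues_zero P Q]
  obtain ⟨Λ, h1, h2⟩ := exists_extension_of_le_sublinear
    (LinearPMap.mkSpanSingleton' f (N f) H) N
    (fun c hc g => csInf_dualValues_smul P Q hc g) (csInf_dualValues_add_le P Q) (by
      rintro ⟨g, hg⟩
      obtain ⟨c, rfl⟩ := Submodule.mem_span_singleton.1 hg
      rw [LinearPMap.mkSpanSingleton'_apply]
      simp only [RingHom.id_apply, smul_eq_mul]
      rcases lt_trichotomy c 0 with hc | hc | hc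
      · have h3 := csInf_dualValues_add_le P Q (c • f) ((-c) • f)
        rw [← add_smul, add_neg_cancel, zero_smul, csInf_dualValues_zero,
          csInf_dualValues_smul P Q (neg_pos.2 hc)] at h3
        simp only [hN]; linarith
      · simp [hc, hN, csInf_dualValues_zero P Q]
      · exact (csInf_dualValues_smul P Q hc f).ge)
  refine ⟨Λ, ?_, h2⟩
  have := h1 ⟨f, Submodule.mem_span_singleton_self f⟩
  exact this.trans (LinearPMap.mkSpanSingleton'_apply_self f (N f) H _)

/-- A positive functional on `C(Y, ℝ)`, `Y` compact, is integration against a finite measure. -/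
lemma exists_measure_of_positive_linearMap {Y : Type*} [MetricSpace Y] [CompactSpace Y]
    [MeasurableSpace Y] [BorelSpace Y] (Λ : C(Y, ℝ) →ₗ[ℝ] ℝ)
    (hΛ : ∀ f, (∀ y, 0 ≤ f y) → 0 ≤ Λ f) :
    ∃ γ : Measure Y, IsFiniteMeasure γ ∧ ∀ f : C(Y, ℝ), ∫ y, f y ∂γ = Λ f := by
  let Λ' : CompactlySupportedContinuousMap Y ℝ →ₚ[ℝ] ℝ := PositiveLinearMap.mk₀
    { toFun := fun f => Λ f.toContinuousMap
      map_add' := fun f g => by rw [← map_add]; rfl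
      map_smul' := fun c f => by simp only [RingHom.id_apply]; rw [← map_smul]; rfl }
    fun f hf => hΛ _ fun y => hf y
  refine ⟨RealRMK.rieszMeasure Λ', ?_, fun f => ?_⟩
  · infer_instance
  · exact RealRMK.integral_rieszMeasure Λ' ⟨f, HasCompactSupport.of_compactSpace f⟩

/-- Kantorovich duality on a compact metric space, with approximate dual optimizers. -/
theorem exists_coupling_forall_exists_dual (c : C(X × X, ℝ)) :
    ∃ γ : Measure (X × X), IsProbabilityMeasure γ ∧ γ.map Prod.fst = P ∧ γ.map Prod.snd = Q ∧
      ∀ δ > 0, ∃ φ ψ : C(X, ℝ), (∀ x y, φ x + ψ y ≤ c (x, y)) ∧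
        ∫ p, c p ∂γ ≤ ∫ x, φ x ∂P + ∫ y, ψ y ∂Q + δ := by
  obtain ⟨Λ, hc, hle⟩ := exists_linearMap_le_csInf_dualValues P Q (-c)
  have hpos : ∀ f : C(X × X, ℝ), (∀ p, 0 ≤ f p) → 0 ≤ Λ f := by
    intro f hf
    have := (hle (-f)).trans (csInf_dualValues_le P Q 0 0 fun x y => by simpa using hf (x, y))
    simpa using this
  obtain ⟨γ, hγ, hint⟩ := exists_measure_of_positive_linearMap Λ hpos
  have hfst : ∀ φ : C(X, ℝ), ∫ p, φ p.1 ∂γ = ∫ x, φ x ∂P := by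
    intro φ
    have key : ∀ φ : C(X, ℝ), ∫ p, φ p.1 ∂γ ≤ ∫ x, φ x ∂P := fun φ => by
      have h1 := hint (φ.comp ContinuousMap.fst)
      have h2 := (hle (φ.comp ContinuousMap.fst)).trans
        (csInf_dualValues_le P Q φ 0 fun x y => by simp)
      simp at h1 h2
      linarith
    refine le_antisymm (key φ) ?_
    have := key (-φ)
    simp only [ContinuousMap.neg_apply, integral_neg] at this
    linarith
  have hsnd : ∀ φ : C(X, ℝ), ∫ p, φ p.2 ∂γ = ∫ x, φ x ∂Q := by
    intro φ
    have key : ∀ φ : C(X, ℝ), ∫ p, φ p.2 ∂γ ≤ ∫ x, φ x ∂Q := fun φ => by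
      have h1 := hint (φ.comp ContinuousMap.snd)
      have h2 := (hle (φ.comp ContinuousMap.snd)).trans
        (csInf_dualValues_le P Q 0 φ fun x y => by simp)
      simp at h1 h2
      linarith
    refine le_antisymm (key φ) ?_
    have := key (-φ)
    simp only [ContinuousMap.neg_apply, integral_neg] at this
    linarith
  have hP : γ.map Prod.fst = P := by
    refine ext_of_forall_integral_eq_of_IsFiniteMeasure fun f => ?_
    rw [integral_map measurable_fst.aemeasurable f.continuous.aestronglyMeasurable]
    exact hfst f.toContinuousMap
  have hQ : γ.map Prod.snd = Q := by
    refine ext_of_forall_integral_eq_of_IsFiniteMeasure fun f => ?_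
    rw [integral_map measurable_snd.aemeasurable f.continuous.aestronglyMeasurable]
    exact hsnd f.toContinuousMap
  have hprob : IsProbabilityMeasure γ := by
    constructor
    rw [← Set.preimage_univ (f := Prod.fst), ← Measure.map_apply measurable_fst MeasurableSet.univ,
      hP, measure_univ]
  refine ⟨γ, hprob, hP, hQ, fun δ hδ => ?_⟩
  obtain ⟨_, ⟨φ, ψ, h, rfl⟩, hr⟩ := exists_lt_of_csInf_lt (nonempty_dualValues P Q (-c))
    (lt_add_of_pos_right _ hδ)
  refine ⟨-φ, -ψ, fun x y => ?_, ?_⟩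
  · have := h x y
    simp at this ⊢
    linarith
  · have h1 := hint (-c)
    simp only [ContinuousMap.neg_apply, integral_neg] at h1 ⊢
    linarith

end Duality

section Potentials

variable {d : ℕ}

/-- The closed unit cube `[0,1]^d`. -/
def closedCube (d : ℕ) : Set (Euc d) := {x | ∀ i, x i ∈ Set.Icc (0 : ℝ) 1}

lemma norm_le_of_forall_abs_le {x : Euc d} {a : ℝ} (ha : 0 ≤ a) (h : ∀ i, |x i| ≤ a) :
    ‖x‖ ≤ d * a := by
  rw [EuclideanSpace.norm_eq]
  refine Real.sqrt_le_iff.2 ⟨by positivity, ?_⟩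
  have hd : (d : ℝ) ≤ d ^ 2 := by
    exact_mod_cast Nat.le_self_pow two_ne_zero d
  calc ∑ i, ‖x i‖ ^ 2 ≤ ∑ _i : Fin d, a ^ 2 :=
        Finset.sum_le_sum fun i _ => pow_le_pow_left₀ (norm_nonneg _) (h i) 2
    _ = d * a ^ 2 := by simp
    _ ≤ d ^ 2 * a ^ 2 := by gcongr
    _ = (d * a) ^ 2 := by ring

lemma norm_le_of_mem_closedCube {x : Euc d} (hx : x ∈ closedCube d) : ‖x‖ ≤ d := by
  simpa using norm_le_of_forall_abs_le zero_le_one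
    fun i => abs_le.2 ⟨by linarith [(hx i).1], (hx i).2⟩

lemma isCompact_closedCube (d : ℕ) : IsCompact (closedCube d) := by
  refine Metric.isCompact_of_isClosed_isBounded ?_ ?_
  · have : closedCube d = ⋂ i, {x : Euc d | x i ∈ Set.Icc (0 : ℝ) 1} := by
      ext; simp [closedCube]
    rw [this]
    exact isClosed_iInter fun i => isClosed_Icc.preimage (by fun_prop)
  · exact (Metric.isBounded_closedBall (x := (0 : Euc d)) (r := d)).subset fun x hx => by
      simpa using norm_le_of_mem_closedCube hx

instance : CompactSpace (closedCube d) := isCompact_iff_compactSpace.1 (isCompact_closedCube d)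

instance : Nonempty (closedCube d) := ⟨⟨0, fun i => by simp⟩⟩

/-- Globally defined convex functions with Lipschitz constant `d`. -/
structure IsPotential (u : Euc d → ℝ) : Prop where
  convexOn : ConvexOn ℝ Set.univ u
  abs_sub_le : ∀ x y, |u x - u y| ≤ d * ‖x - y‖

lemma IsPotential.continuous {u : Euc d → ℝ} (hu : IsPotential u) : Continuous u :=
  (LipschitzWith.of_dist_le_mul (K := d) fun x y => by
    simpa [Real.dist_eq, dist_eq_norm] using hu.abs_sub_le x y).continuous

/-- The Legendre transform of a function on the closed cube. -/
def legendre (g : closedCube d → ℝ) (x : Euc d) : ℝ := ⨆ y : closedCube d, (⟪x, (y : Euc d)⟫ - g y)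

lemma bddAbove_legendre {g : closedCube d → ℝ} (hg : BddBelow (Set.range g)) (x : Euc d) :
    BddAbove (Set.range fun y : closedCube d => ⟪x, (y : Euc d)⟫ - g y) := by
  obtain ⟨m, hm⟩ := hg
  refine ⟨‖x‖ * d - m, ?_⟩
  rintro _ ⟨y, rfl⟩
  have h1 := real_inner_le_norm x (y : Euc d)
  have h2 := mul_le_mul_of_nonneg_left (norm_le_of_mem_closedCube y.2) (norm_nonneg x)
  have h3 := hm ⟨y, rfl⟩
  simp only; linarith

lemma le_legendre {g : closedCube d → ℝ} (hg : BddBelow (Set.range g)) (x : Euc d)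
    (y : closedCube d) : ⟪x, (y : Euc d)⟫ - g y ≤ legendre g x :=
  le_ciSup (bddAbove_legendre hg x) y

lemma legendre_isPotential {g : closedCube d → ℝ} (hg : BddBelow (Set.range g)) :
    IsPotential (legendre g) := by
  have key : ∀ x y, legendre g x - legendre g y ≤ d * ‖x - y‖ := by
    intro x y
    rw [sub_le_iff_le_add]
    refine ciSup_le fun z => ?_
    have h1 := le_legendre hg y z
    have h2 := real_inner_le_norm (x - y) (z : Euc d)
    have h3 := mul_le_mul_of_nonneg_left (norm_le_of_mem_closedCube z.2) (norm_nonneg (x - y))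
    rw [inner_sub_left] at h2
    linarith
  refine ⟨⟨convex_univ, fun x _ y _ a b ha hb hab => ciSup_le fun z => ?_⟩, fun x y => ?_⟩
  · have h1 := mul_le_mul_of_nonneg_left (le_legendre hg x z) ha
    have h2 := mul_le_mul_of_nonneg_left (le_legendre hg y z) hb
    rw [inner_add_left, real_inner_smul_left, real_inner_smul_left]
    have h3 : g z = a * g z + b * g z := by rw [← add_mul, hab, one_mul]
    simp only [smul_eq_mul]
    linarith
  · refine abs_sub_le_iff.2 ⟨key x y, ?_⟩
    rw [norm_sub_rev]
    exact key y x

lemma integrable_of_isCompact {Y : Type*} [MetricSpace Y] [MeasurableSpace Y] [BorelSpace Y]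
    {γ : Measure Y} [IsFiniteMeasure γ] {K : Set Y} (hK : IsCompact K) (hγ : γ Kᶜ = 0)
    {f : Y → ℝ} (hf : Continuous f) : Integrable f γ := by
  have h := hf.continuousOn.integrableOn_compact (μ := γ) hK
  rwa [IntegrableOn, Measure.restrict_eq_self_of_ae_mem (ae_iff.2 hγ)] at h

lemma nonneg_of_mem_costs {P Q : Measure (Euc d)} {r : ℝ}
    (hr : r ∈ {r | ∃ γ ∈ Couplings P Q, r = ∫ p, ‖p.1 - p.2‖ ^ 2 ∂γ}) : 0 ≤ r := by
  obtain ⟨γ, _, rfl⟩ := hr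
  exact integral_nonneg fun p => by positivity

lemma W2sq_nonneg (P Q : Measure (Euc d)) : 0 ≤ W2sq P Q :=
  Real.sInf_nonneg fun _ hr => nonneg_of_mem_costs hr

lemma W2sq_le {P Q : Measure (Euc d)} {γ : Measure (Euc d × Euc d)} (hγ : γ ∈ Couplings P Q) :
    W2sq P Q ≤ ∫ p, ‖p.1 - p.2‖ ^ 2 ∂γ :=
  csInf_le ⟨0, fun _ hr => nonneg_of_mem_costs hr⟩ ⟨γ, hγ, rfl⟩

/-- Weak duality. -/
lemma dual_le_W2sq {P Q : Measure (Euc d)} [IsProbabilityMeasure P] [IsProbabilityMeasure Q]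
    (hP : P (closedCube d)ᶜ = 0) (hQ : Q (closedCube d)ᶜ = 0) {u w : Euc d → ℝ}
    (hu : Continuous u) (hw : Continuous w)
    (huw : ∀ x ∈ closedCube d, ∀ y ∈ closedCube d, ⟪x, y⟫ ≤ u x + w y) :
    ∫ x, (‖x‖ ^ 2 - 2 * u x) ∂P + ∫ y, (‖y‖ ^ 2 - 2 * w y) ∂Q ≤ W2sq P Q := by
  have hK := isCompact_closedCube d
  refine le_csInf ⟨_, P.prod Q, ⟨inferInstance, by simp, by simp⟩, rfl⟩ ?_
  rintro _ ⟨γ, ⟨hγ, rfl, rfl⟩, rfl⟩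
  have hcu : Continuous fun x : Euc d => ‖x‖ ^ 2 - 2 * u x := by fun_prop
  have hcw : Continuous fun x : Euc d => ‖x‖ ^ 2 - 2 * w x := by fun_prop
  have hPu := integrable_of_isCompact hK hP hcu
  have hQw := integrable_of_isCompact hK hQ hcw
  have h1 : ∀ᵐ p ∂γ, p.1 ∈ closedCube d := by
    refine ae_of_ae_map measurable_fst.aemeasurable (p := fun x => x ∈ closedCube d) ?_
    exact ae_iff.2 hP
  have h2 : ∀ᵐ p ∂γ, p.2 ∈ closedCube d := by
    refine ae_of_ae_map measurable_snd.aemeasurable (p := fun x => x ∈ closedCube d) ?_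
    exact ae_iff.2 hQ
  have hcost : Integrable (fun p : Euc d × Euc d => ‖p.1 - p.2‖ ^ 2) γ := by
    refine integrable_of_isCompact (hK.prod hK) ?_ (by fun_prop)
    have : ∀ᵐ p ∂γ, p ∈ closedCube d ×ˢ closedCube d := by
      filter_upwards [h1, h2] with p hp1 hp2 using ⟨hp1, hp2⟩
    exact ae_iff.1 this
  have hu1 : Integrable (fun p : Euc d × Euc d => ‖p.1‖ ^ 2 - 2 * u p.1) γ :=
    hPu.comp_measurable measurable_fst
  have hw1 : Integrable (fun p : Euc d × Euc d => ‖p.2‖ ^ 2 - 2 * w p.2) γ :=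
    hQw.comp_measurable measurable_snd
  rw [integral_map measurable_fst.aemeasurable hcu.aestronglyMeasurable,
    integral_map measurable_snd.aemeasurable hcw.aestronglyMeasurable, ← integral_add hu1 hw1]
  refine integral_mono_ae (hu1.add hw1) hcost ?_
  filter_upwards [h1, h2] with p hp1 hp2
  have := huw _ hp1 _ hp2
  rw [norm_sub_sq_real]
  linarith

/-- Near-optimal dual potentials for the quadratic cost on the closed cube. -/
lemma exists_potentials {P Q : Measure (Euc d)} [IsProbabilityMeasure P] [IsProbabilityMeasure Q]
    (hP : P (closedCube d)ᶜ = 0) (hQ : Q (closedCube d)ᶜ = 0) {δ : ℝ} (hδ : 0 < δ) :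
    ∃ u w : Euc d → ℝ, IsPotential u ∧ IsPotential w ∧
      (∀ x ∈ closedCube d, ∀ y ∈ closedCube d, ⟪x, y⟫ ≤ u x + w y) ∧
      W2sq P Q ≤ ∫ x, (‖x‖ ^ 2 - 2 * u x) ∂P + ∫ y, (‖y‖ ^ 2 - 2 * w y) ∂Q + δ := by
  have hmeas : MeasurableSet (closedCube d) := (isCompact_closedCube d).isClosed.measurableSet
  have hlift : ∀ P : Measure (Euc d), P (closedCube d)ᶜ = 0 →
      (P.comap (Subtype.val : closedCube d → Euc d)).map Subtype.val = P := fun P hP => by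
    rw [map_comap_subtype_coe hmeas]
    exact Measure.restrict_eq_self_of_ae_mem (ae_iff.2 hP)
  have hprob : ∀ P : Measure (Euc d), IsProbabilityMeasure P → P (closedCube d)ᶜ = 0 →
      IsProbabilityMeasure (P.comap (Subtype.val : closedCube d → Euc d)) := fun P hP' hP => by
    rw [← Measure.isProbabilityMeasure_map_iff measurable_subtype_coe.aemeasurable, hlift P hP]
    exact hP'
  set P' := P.comap (Subtype.val : closedCube d → Euc d)
  set Q' := Q.comap (Subtype.val : closedCube d → Euc d)
  have hP1 : P'.map Subtype.val = P := hlift P hP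
  have hQ1 : Q'.map Subtype.val = Q := hlift Q hQ
  have := hprob P inferInstance hP
  have := hprob Q inferInstance hQ
  let c : C(closedCube d × closedCube d, ℝ) :=
    ⟨fun p => ‖(p.1 : Euc d) - (p.2 : Euc d)‖ ^ 2, by fun_prop⟩
  obtain ⟨γ, hγ, hγ1, hγ2, hdual⟩ := exists_coupling_forall_exists_dual P' Q' c
  obtain ⟨φ, ψ, hφψ, hopt⟩ := hdual δ hδ
  have hinner : ∀ x y : closedCube d,
      ⟪(x : Euc d), (y : Euc d)⟫ ≤ (‖(x : Euc d)‖ ^ 2 - φ x) / 2 + (‖(y : Euc d)‖ ^ 2 - ψ y) / 2 := by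
    intro x y
    have h := hφψ x y
    simp only [c, ContinuousMap.coe_mk] at h
    rw [norm_sub_sq_real] at h
    linarith
  set g : closedCube d → ℝ := fun y => (‖(y : Euc d)‖ ^ 2 - ψ y) / 2 with hg
  have hgb : BddBelow (Set.range g) := by
    refine (isCompact_range (f := g) ?_).bddBelow
    fun_prop
  set u := legendre g
  have hu : IsPotential u := legendre_isPotential hgb
  set k : closedCube d → ℝ := fun x => u x
  have hkb : BddBelow (Set.range k) := by
    refine (isCompact_range (f := k) ?_).bddBelow
    exact hu.continuous.comp continuous_subtype_val
  set w := legendre k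
  have hw : IsPotential w := legendre_isPotential hkb
  refine ⟨u, w, hu, hw, fun x hx y hy => ?_, ?_⟩
  · have := le_legendre hkb y ⟨x, hx⟩
    rw [real_inner_comm] at this
    simp only [k] at this
    linarith
  have huc := hu.continuous
  have hwc := hw.continuous
  have hcoup : γ.map (Prod.map Subtype.val Subtype.val) ∈ Couplings P Q := by
    have hm : Measurable (Prod.map Subtype.val Subtype.val :
        closedCube d × closedCube d → Euc d × Euc d) :=
      measurable_subtype_coe.prodMap measurable_subtype_coe
    refine ⟨Measure.isProbabilityMeasure_map hm.aemeasurable, ?_, ?_⟩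
    · rw [Measure.map_map measurable_fst hm, ← hP1, ← hγ1,
        Measure.map_map measurable_subtype_coe measurable_fst]
      rfl
    · rw [Measure.map_map measurable_snd hm, ← hQ1, ← hγ2,
        Measure.map_map measurable_subtype_coe measurable_snd]
      rfl
  have hW := W2sq_le hcoup
  rw [integral_map (measurable_subtype_coe.prodMap measurable_subtype_coe).aemeasurable
    (by fun_prop)] at hW
  have hφ : ∫ x, φ x ∂P' ≤ ∫ x, (‖x‖ ^ 2 - 2 * u x) ∂P := by
    rw [← hP1, integral_map measurable_subtype_coe.aemeasurable
      (Continuous.aestronglyMeasurable (by fun_prop))]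
    refine integral_mono (integrable_continuousMap P' φ)
      (integrable_continuousMap P' ⟨fun x => ‖(x : Euc d)‖ ^ 2 - 2 * u x, by fun_prop⟩) fun x => ?_
    have : u x ≤ (‖(x : Euc d)‖ ^ 2 - φ x) / 2 := ciSup_le fun y => by
      have := hinner x y
      simp only [hg]; linarith
    simp only; linarith
  have hψ : ∫ x, ψ x ∂Q' ≤ ∫ x, (‖x‖ ^ 2 - 2 * w x) ∂Q := by
    rw [← hQ1, integral_map measurable_subtype_coe.aemeasurable
      (Continuous.aestronglyMeasurable (by fun_prop))]
    refine integral_mono (integrable_continuousMap Q' ψ)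
      (integrable_continuousMap Q' ⟨fun x => ‖(x : Euc d)‖ ^ 2 - 2 * w x, by fun_prop⟩) fun y => ?_
    have : w y ≤ (‖(y : Euc d)‖ ^ 2 - ψ y) / 2 := ciSup_le fun x => by
      have := le_legendre hgb (x : Euc d) y
      rw [real_inner_comm]
      simp only [hg, k] at this ⊢; linarith
    simp only; linarith
  have hc : ∫ p, c p ∂γ = ∫ p : closedCube d × closedCube d,
      ‖(Prod.map Subtype.val Subtype.val p : Euc d × Euc d).1 -
        (Prod.map Subtype.val Subtype.val p : Euc d × Euc d).2‖ ^ 2 ∂γ := rfl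
  linarith

end Potentials

section Grid

variable {d : ℕ}

/-- The center of the grid cell of side `h` with integer index `k`. -/
def gridCenter (d : ℕ) (h : ℝ) (k : Fin d → ℤ) : Euc d :=
  (EuclideanSpace.equiv (Fin d) ℝ).symm fun i => h * k i + h / 2

/-- Indices of the grid cells contained in the unit cube. -/
def gridIndex (d L : ℕ) : Finset (Fin d → ℤ) := Fintype.piFinset fun _ => Finset.Ico (0 : ℤ) L

/-- The open cube of side `h` centered at the origin. -/
def centeredBox (d : ℕ) (h : ℝ) : Set (Euc d) := {v | ∀ i, |v i| < h / 2}

@[simp]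
lemma gridCenter_apply (h : ℝ) (k : Fin d → ℤ) (i : Fin d) :
    gridCenter d h k i = h * k i + h / 2 := rfl

@[simp]
lemma gridSnap_apply (h : ℝ) (x : Euc d) (i : Fin d) :
    gridSnap d h x i = h * ⌊x i / h⌋ + h / 2 := rfl

lemma measurable_gridSnap (d : ℕ) (h : ℝ) : Measurable (gridSnap d h) := by
  refine (EuclideanSpace.equiv (Fin d) ℝ).symm.continuous.measurable.comp
    (measurable_pi_lambda _ fun i => ?_)
  fun_prop

lemma neg_mem_centeredBox {h : ℝ} {v : Euc d} (hv : v ∈ centeredBox d h) :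
    -v ∈ centeredBox d h := fun i => by simpa using hv i

lemma floor_gridCenter_add {h : ℝ} (hh : 0 < h) (k : Fin d → ℤ) {v : Euc d}
    (hv : v ∈ centeredBox d h) (i : Fin d) : ⌊(gridCenter d h k + v) i / h⌋ = k i := by
  have := abs_lt.1 (hv i)
  rw [Int.floor_eq_iff, le_div_iff₀ hh, div_lt_iff₀ hh]
  simp only [PiLp.add_apply, gridCenter_apply]
  constructor <;> nlinarith

lemma gridSnap_gridCenter_add {h : ℝ} (hh : 0 < h) (k : Fin d → ℤ) {v : Euc d}
    (hv : v ∈ centeredBox d h) : gridSnap d h (gridCenter d h k + v) = gridCenter d h k := by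
  ext i
  rw [gridSnap_apply, floor_gridCenter_add hh k hv, gridCenter_apply]

lemma gridCenter_add_mem_unitCube {L : ℕ} {h : ℝ} (hh : 0 < h) (hL : h * L = 1)
    {k : Fin d → ℤ} (hk : k ∈ gridIndex d L) {v : Euc d} (hv : v ∈ centeredBox d h) :
    gridCenter d h k + v ∈ unitCube d := by
  intro i
  have h1 := abs_lt.1 (hv i)
  have h2 := Finset.mem_Ico.1 (Fintype.mem_piFinset.1 hk i)
  have h3 : (0 : ℝ) ≤ k i := by exact_mod_cast h2.1
  have h4 : (k i : ℝ) + 1 ≤ L := by exact_mod_cast h2.2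
  simp only [PiLp.add_apply, gridCenter_apply, Set.mem_Ioo]
  constructor
  · nlinarith
  · nlinarith

lemma gridSnap_mem_closedCube {L : ℕ} {h : ℝ} (hh : 0 < h) (hL : h * L = 1) {x : Euc d}
    (hx : x ∈ unitCube d) : gridSnap d h x ∈ closedCube d := by
  intro i
  obtain ⟨h1, h2⟩ := hx i
  have h3 : (0 : ℝ) ≤ ⌊x i / h⌋ := by exact_mod_cast Int.floor_nonneg.2 (by positivity)
  have h4 : (⌊x i / h⌋ : ℝ) + 1 ≤ L := by
    have : ⌊x i / h⌋ < (L : ℤ) := Int.floor_lt.2 (by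
      rw [div_lt_iff₀ hh]; push_cast; linarith)
    exact_mod_cast this
  rw [gridSnap_apply]
  constructor <;> nlinarith

lemma volume_pi_Ioo_preimage (a b : ℝ) :
    volume {x : Euc d | ∀ i, x i ∈ Set.Ioo a b} = ENNReal.ofReal (b - a) ^ d := by
  have : {x : Euc d | ∀ i, x i ∈ Set.Ioo a b} =
      (WithLp.ofLp : Euc d → Fin d → ℝ) ⁻¹' (Set.univ.pi fun _ => Set.Ioo a b) := by
    ext; simp
  rw [this, (PiLp.volume_preserving_ofLp (Fin d)).measure_preimage
    (MeasurableSet.univ_pi fun _ => measurableSet_Ioo).nullMeasurableSet, volume_pi_pi]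
  simp

lemma volume_unitCube (d : ℕ) : volume (unitCube d) = 1 := by
  rw [unitCube, volume_pi_Ioo_preimage]; simp

lemma volume_centeredBox (d : ℕ) (h : ℝ) :
    volume (centeredBox d h) = ENNReal.ofReal h ^ d := by
  have : centeredBox d h = {x : Euc d | ∀ i, x i ∈ Set.Ioo (-(h / 2)) (h / 2)} := by
    ext; simp [centeredBox, abs_lt]
  rw [this, volume_pi_Ioo_preimage]; ring_nf

lemma measurableSet_unitCube (d : ℕ) : MeasurableSet (unitCube d) := by
  have : unitCube d = ⋂ i, {x : Euc d | x i ∈ Set.Ioo (0 : ℝ) 1} := by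
    ext; simp [unitCube]
  rw [this]
  exact MeasurableSet.iInter fun i => measurableSet_Ioo.preimage (by fun_prop)

lemma measurableSet_centeredBox (d : ℕ) (h : ℝ) : MeasurableSet (centeredBox d h) := by
  have : centeredBox d h = ⋂ i, {x : Euc d | x i ∈ {t : ℝ | |t| < h / 2}} := by
    ext; simp [centeredBox]
  rw [this]
  exact MeasurableSet.iInter fun i =>
    (measurableSet_lt (by fun_prop) measurable_const).preimage (by fun_prop)

lemma card_gridIndex (d L : ℕ) : (gridIndex d L).card = L ^ d := by
  simp [gridIndex, Fintype.card_piFinset]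

/-- The open grid cell with index `k`. -/
def gridCell (d : ℕ) (h : ℝ) (k : Fin d → ℤ) : Set (Euc d) :=
  {x | -gridCenter d h k + x ∈ centeredBox d h}

lemma preimage_gridCell (h : ℝ) (k : Fin d → ℤ) :
    (fun v => gridCenter d h k + v) ⁻¹' gridCell d h k = centeredBox d h := by
  ext v; simp [gridCell]

lemma measurableSet_gridCell (h : ℝ) (k : Fin d → ℤ) : MeasurableSet (gridCell d h k) :=
  (measurableSet_centeredBox d h).preimage (measurable_const_add _)

lemma gridCell_subset_unitCube {L : ℕ} {h : ℝ} (hh : 0 < h) (hL : h * L = 1)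
    {k : Fin d → ℤ} (hk : k ∈ gridIndex d L) : gridCell d h k ⊆ unitCube d := fun x hx => by
  simpa using gridCenter_add_mem_unitCube hh hL hk hx

lemma pairwise_disjoint_gridCell {h : ℝ} (hh : 0 < h) (s : Set (Fin d → ℤ)) :
    s.Pairwise (Function.onFun Disjoint (gridCell d h)) := by
  intro k _ l _ hkl
  refine Set.disjoint_left.2 fun x hx hx' => hkl ?_
  ext i
  have h1 := floor_gridCenter_add hh k hx i
  have h2 := floor_gridCenter_add hh l hx' i
  rw [add_neg_cancel_left] at h1 h2
  exact h1.symm.trans h2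

lemma iUnion_gridCell_ae_eq {L : ℕ} {h : ℝ} (hh : 0 < h) (hL : h * L = 1) :
    (⋃ k ∈ gridIndex d L, gridCell d h k : Set (Euc d)) =ᵐ[volume] unitCube d := by
  refine ae_eq_of_subset_of_measure_ge
    (Set.iUnion₂_subset fun k hk => gridCell_subset_unitCube hh hL hk) ?_
    (Finset.measurableSet_biUnion _ fun k _ => measurableSet_gridCell h k).nullMeasurableSet
    (by simp [volume_unitCube])
  rw [measure_biUnion_finset (pairwise_disjoint_gridCell hh _)
    fun k _ => measurableSet_gridCell h k]
  have : ∀ k ∈ gridIndex d L, volume (gridCell d h k) = ENNReal.ofReal h ^ d := fun k _ => by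
    rw [← volume_centeredBox, gridCell]
    exact measure_preimage_add volume (-gridCenter d h k) (centeredBox d h)
  rw [Finset.sum_congr rfl this, Finset.sum_const, card_gridIndex, volume_unitCube, nsmul_eq_mul,
    Nat.cast_pow, ← mul_pow, ← ENNReal.ofReal_natCast, ← ENNReal.ofReal_mul (Nat.cast_nonneg L),
    mul_comm, hL]
  simp

/-- Folding an integral over the unit cube onto a single symmetric cell. -/
lemma abs_setIntegral_unitCube_le {L : ℕ} {h : ℝ} (hh : 0 < h) (hL : h * L = 1)
    {F : Euc d → ℝ} (hF : IntegrableOn F (unitCube d)) {T : ℝ}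
    (hT : ∀ v ∈ centeredBox d h, |∑ k ∈ gridIndex d L,
      (F (gridCenter d h k + v) + F (gridCenter d h k + -v))| ≤ L ^ d * T) :
    |∫ x in unitCube d, F x| ≤ T := by
  have hmp := fun k => measurePreserving_add_left (volume : Measure (Euc d)) (gridCenter d h k)
  have hemb := fun k => measurableEmbedding_addLeft (gridCenter d h k)
  have hcell : ∀ k ∈ gridIndex d L, IntegrableOn F (gridCell d h k) := fun k hk =>
    hF.mono_set (gridCell_subset_unitCube hh hL hk)
  have hbox : ∀ k ∈ gridIndex d L,
      IntegrableOn (fun v => F (gridCenter d h k + v)) (centeredBox d h) := fun k hk => by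
    have := ((hmp k).integrableOn_comp_preimage (hemb k)).2 (hcell k hk)
    rwa [preimage_gridCell] at this
  have hneg : (fun v : Euc d => -v) ⁻¹' centeredBox d h = centeredBox d h := by
    ext v; simp [centeredBox]
  have hmpn := Measure.measurePreserving_neg (volume : Measure (Euc d))
  have hembn := (MeasurableEquiv.neg (Euc d)).measurableEmbedding
  have hbox' : ∀ k ∈ gridIndex d L,
      IntegrableOn (fun v => F (gridCenter d h k + -v)) (centeredBox d h) := fun k hk => by
    have := (hmpn.integrableOn_comp_preimage hembn).2 (hbox k hk)
    rwa [hneg] at this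
  have h1 : ∫ x in unitCube d, F x =
      ∑ k ∈ gridIndex d L, ∫ v in centeredBox d h, F (gridCenter d h k + v) := by
    rw [← setIntegral_congr_set (iUnion_gridCell_ae_eq hh hL),
      integral_biUnion_finset _ (fun k _ => measurableSet_gridCell h k)
      (pairwise_disjoint_gridCell hh _) hcell]
    refine Finset.sum_congr rfl fun k _ => ?_
    rw [← (hmp k).setIntegral_preimage_emb (hemb k), preimage_gridCell]
  have h2 : ∀ k ∈ gridIndex d L, ∫ v in centeredBox d h, F (gridCenter d h k + -v) =
      ∫ v in centeredBox d h, F (gridCenter d h k + v) := fun k _ => by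
    rw [← hmpn.setIntegral_preimage_emb hembn (fun v => F (gridCenter d h k + v)), hneg]
  have h3 : 2 * ∫ x in unitCube d, F x = ∫ v in centeredBox d h, ∑ k ∈ gridIndex d L,
      (F (gridCenter d h k + v) + F (gridCenter d h k + -v)) := by
    rw [integral_finsetSum _ fun k hk => Integrable.fun_add (hbox k hk) (hbox' k hk), h1,
      Finset.mul_sum]
    refine Finset.sum_congr rfl fun k hk => ?_
    rw [integral_add (hbox k hk) (hbox' k hk), h2 k hk]
    ring
  have hvol : volume.real (centeredBox d h) = h ^ d := by
    rw [measureReal_def, volume_centeredBox]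
    simp [hh.le]
  have h4 := norm_setIntegral_le_of_norm_le_const (μ := volume) (s := centeredBox d h)
    (by rw [volume_centeredBox]; finiteness)
    fun v hv => (Real.norm_eq_abs _).trans_le (hT v hv)
  rw [← h3, hvol, Real.norm_eq_abs, abs_mul, abs_two] at h4
  have h5 : (L : ℝ) ^ d * T * h ^ d = T := by
    rw [mul_right_comm, ← mul_pow, mul_comm (L : ℝ), hL, one_pow, one_mul]
  rw [h5] at h4
  linarith [abs_nonneg (∫ x in unitCube d, F x)]

end Grid

section SecondDifference

variable {d : ℕ}

/-- The symmetric second difference of `f` at `g` in direction `v`. -/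
def secondDiff (f : Euc d → ℝ) (g v : Euc d) : ℝ := f (g + v) + f (g + -v) - 2 * f g

lemma secondDiff_nonneg {u : Euc d → ℝ} (hu : ConvexOn ℝ Set.univ u) (g v : Euc d) :
    0 ≤ secondDiff u g v := by
  have h := hu.2 (Set.mem_univ (g + v)) (Set.mem_univ (g + -v))
    (show (0 : ℝ) ≤ 1 / 2 by norm_num) (show (0 : ℝ) ≤ 1 / 2 by norm_num) (by norm_num)
  have hg : (1 / 2 : ℝ) • (g + v) + (1 / 2 : ℝ) • (g + -v) = g := by module
  rw [hg] at h
  simp only [smul_eq_mul] at h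
  rw [secondDiff]
  linarith

lemma secondDiff_smul_le {u : Euc d → ℝ} (hu : ConvexOn ℝ Set.univ u) (g e : Euc d) {s t : ℝ}
    (hs : 0 < s) (ht : |t| ≤ s) : secondDiff u g (t • e) ≤ secondDiff u g (s • e) := by
  obtain ⟨h1, h2⟩ := abs_le.1 ht
  have ha : 0 ≤ (s + t) / (2 * s) := div_nonneg (by linarith) (by linarith)
  have hb : 0 ≤ (s - t) / (2 * s) := div_nonneg (by linarith) (by linarith)
  have hab : (s + t) / (2 * s) + (s - t) / (2 * s) = 1 := by field_simp; ring
  have hsub : (s + t) / (2 * s) * s - (s - t) / (2 * s) * s = t := by field_simp; ring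
  set a := (s + t) / (2 * s)
  set b := (s - t) / (2 * s)
  have h3 := hu.2 (Set.mem_univ (g + s • e)) (Set.mem_univ (g + -(s • e))) ha hb hab
  have h4 := hu.2 (Set.mem_univ (g + s • e)) (Set.mem_univ (g + -(s • e))) hb ha
    (by rw [add_comm, hab])
  have e3 : a • (g + s • e) + b • (g + -(s • e)) = g + t • e := by
    calc _ = (a + b) • g + (a * s - b * s) • e := by module
      _ = _ := by rw [hab, hsub, one_smul]
  have e4 : b • (g + s • e) + a • (g + -(s • e)) = g + -(t • e) := by
    calc _ = (a + b) • g + -((a * s - b * s) • e) := by module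
      _ = _ := by rw [hab, hsub, one_smul]
  rw [e3] at h3
  rw [e4] at h4
  simp only [smul_eq_mul] at h3 h4
  have h5 : ∀ c : ℝ, a * c + b * c = c := fun c => by rw [← add_mul, hab, one_mul]
  have := h5 (u (g + s • e))
  have := h5 (u (g + -(s • e)))
  simp only [secondDiff]
  linarith

lemma secondDiff_le_sum_single (hd : 1 ≤ d) {u : Euc d → ℝ} (hu : ConvexOn ℝ Set.univ u)
    (g v : Euc d) : secondDiff u g v ≤
      ∑ i, (d : ℝ)⁻¹ * secondDiff u g ((d * v i) • EuclideanSpace.single i (1 : ℝ)) := by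
  have hd0 : (d : ℝ) ≠ 0 := by positivity
  have hw : ∑ _i : Fin d, (d : ℝ)⁻¹ = 1 := by simp [hd0]
  have hsum : ∀ v : Euc d, g + v =
      ∑ i, (d : ℝ)⁻¹ • (g + (d * v i) • EuclideanSpace.single i (1 : ℝ)) := fun v => by
    simp only [smul_add, Finset.sum_add_distrib, ← Finset.sum_smul, hw, one_smul, smul_smul,
      inv_mul_cancel_left₀ hd0]
    congr 1
    ext j
    simp [Finset.sum_apply, Pi.single_apply]
  have key : ∀ v : Euc d, u (g + v) ≤
      ∑ i, (d : ℝ)⁻¹ * u (g + (d * v i) • EuclideanSpace.single i (1 : ℝ)) := fun v => by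
    conv_lhs => rw [hsum v]
    exact hu.map_sum_le (fun _ _ => by positivity) hw fun _ _ => Set.mem_univ _
  have h1 := key v
  have h2 := key (-v)
  simp only [PiLp.neg_apply, mul_neg, neg_smul] at h2
  have h3 : ∑ _i : Fin d, (d : ℝ)⁻¹ * (2 * u g) = 2 * u g := by
    rw [← Finset.sum_mul, hw, one_mul]
  simp only [secondDiff, mul_sub, mul_add, Finset.sum_sub_distrib, Finset.sum_add_distrib]
  linarith

lemma card_gridIndex_sdiff_le (L m : ℕ) (i : Fin d) :
    (gridIndex d L \ (gridIndex d L).map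
      (addRightEmbedding (Pi.single i (m : ℤ)))).card ≤ m * L ^ (d - 1) := by
  have hsub : gridIndex d L \ (gridIndex d L).map (addRightEmbedding (Pi.single i (m : ℤ))) ⊆
      Fintype.piFinset (Function.update (fun _ => Finset.Ico (0 : ℤ) L) i (Finset.Ico (0 : ℤ) m)) := by
    intro k hk
    rw [Finset.mem_sdiff] at hk
    obtain ⟨hk, hk'⟩ := hk
    have hk0 := Fintype.mem_piFinset.1 hk
    refine Fintype.mem_piFinset.2 fun j => ?_
    rcases eq_or_ne j i with rfl | hj
    · rw [Function.update_self, Finset.mem_Ico]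
      refine ⟨(Finset.mem_Ico.1 (hk0 j)).1, ?_⟩
      by_contra hcon
      refine hk' (Finset.mem_map.2 ⟨k - Pi.single j (m : ℤ), ?_, by simp⟩)
      refine Fintype.mem_piFinset.2 fun l => ?_
      have := Finset.mem_Ico.1 (hk0 l)
      rcases eq_or_ne l j with rfl | hl
      · rw [Finset.mem_Ico]; simp; omega
      · rw [Finset.mem_Ico]; simp [hl]; omega
    · rw [Function.update_of_ne hj]
      exact hk0 j
  refine (Finset.card_le_card hsub).trans ?_
  rw [Fintype.card_piFinset]
  have : ∀ j, (Function.update (fun _ : Fin d => Finset.Ico (0 : ℤ) L) i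
      (Finset.Ico (0 : ℤ) m) j).card = Function.update (fun _ : Fin d => L) i m j := by
    intro j
    rcases eq_or_ne j i with rfl | hj
    · simp
    · simp [hj]
  simp only [this]
  rw [Finset.prod_update_of_mem (Finset.mem_univ i)]
  simp [Finset.card_sdiff]

/-- Second differences along a coordinate direction telescope when summed over the grid. -/
lemma sum_secondDiff_index_le (L m : ℕ) (i : Fin d) (F : (Fin d → ℤ) → ℝ) {M : ℝ}
    (hM : ∀ k, |F (k + Pi.single i (m : ℤ)) - F k| ≤ M) :
    ∑ k ∈ gridIndex d L, (F (k + Pi.single i (m : ℤ)) + F (k - Pi.single i (m : ℤ)) - 2 * F k) ≤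
      2 * (m * L ^ (d - 1) * M) := by
  set s : Fin d → ℤ := Pi.single i (m : ℤ)
  set S := gridIndex d L
  set S' := S.map (addRightEmbedding s)
  let A : (Fin d → ℤ) → ℝ := fun k => F k - F (k - s)
  have hA : ∀ k, |A k| ≤ M := fun k => by simpa [A] using hM (k - s)
  have hM0 : 0 ≤ M := (abs_nonneg _).trans (hM 0)
  have hcard : (S \ S').card ≤ m * L ^ (d - 1) := card_gridIndex_sdiff_le L m i
  have hcard' : (S' \ S).card ≤ m * L ^ (d - 1) :=
    (Finset.card_sdiff_comm (Finset.card_map _)).trans_le hcard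
  have hbound : ∀ U : Finset (Fin d → ℤ), U.card ≤ m * L ^ (d - 1) →
      |∑ k ∈ U, A k| ≤ m * L ^ (d - 1) * M := fun U hU => by
    calc |∑ k ∈ U, A k| ≤ ∑ k ∈ U, |A k| := Finset.abs_sum_le_sum_abs _ _
      _ ≤ U.card * M := by
          rw [← nsmul_eq_mul]
          exact Finset.sum_le_card_nsmul _ _ _ fun k _ => hA k
      _ ≤ m * L ^ (d - 1) * M := by
          gcongr
          exact_mod_cast hU
  have heq : ∑ k ∈ S, (F (k + s) + F (k - s) - 2 * F k) = ∑ k ∈ S', A k - ∑ k ∈ S, A k := by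
    rw [Finset.sum_map, ← Finset.sum_sub_distrib]
    refine Finset.sum_congr rfl fun k _ => ?_
    simp [A]
    ring
  rw [heq, ← Finset.sum_sdiff_sub_sum_sdiff]
  have h1 := (abs_le.1 (hbound _ hcard)).1
  have h2 := (abs_le.1 (hbound _ hcard')).2
  linarith

lemma gridCenter_add_single (h : ℝ) (k : Fin d → ℤ) (i : Fin d) (m : ℤ) :
    gridCenter d h (k + Pi.single i m) =
      gridCenter d h k + (m * h) • EuclideanSpace.single i (1 : ℝ) := by
  ext j
  rcases eq_or_ne j i with rfl | hj
  · simp; ring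
  · simp [hj]

lemma IsPotential.sum_secondDiff_le (hd : 1 ≤ d) {u : Euc d → ℝ} (hu : IsPotential u) {L : ℕ}
    {h : ℝ} (hh : 0 < h) (hL : h * L = 1) {v : Euc d} (hv : v ∈ centeredBox d h) :
    ∑ k ∈ gridIndex d L, secondDiff u (gridCenter d h k) v ≤ L ^ d * (2 * d ^ 3 * h ^ 2) := by
  have hd0 : (0 : ℝ) < d := by exact_mod_cast hd
  have haxis : ∀ i : Fin d, ∑ k ∈ gridIndex d L,
      secondDiff u (gridCenter d h k) ((d * h) • EuclideanSpace.single i (1 : ℝ)) ≤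
        2 * (d * L ^ (d - 1) * (d * (d * h))) := by
    intro i
    have := sum_secondDiff_index_le L d i (fun k => u (gridCenter d h k)) (M := d * (d * h))
      fun k => by
        refine (hu.abs_sub_le _ _).trans_eq ?_
        rw [gridCenter_add_single, add_sub_cancel_left, norm_smul]
        simp [abs_of_pos hh]
    refine le_of_eq_of_le (Finset.sum_congr rfl fun k _ => ?_) this
    rw [sub_eq_add_neg k, ← Pi.single_neg, gridCenter_add_single, gridCenter_add_single]
    simp [secondDiff]
  calc ∑ k ∈ gridIndex d L, secondDiff u (gridCenter d h k) v
      ≤ ∑ k ∈ gridIndex d L, ∑ i, (d : ℝ)⁻¹ *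
          secondDiff u (gridCenter d h k) ((d * h) • EuclideanSpace.single i (1 : ℝ)) := by
        refine Finset.sum_le_sum fun k _ =>
          (secondDiff_le_sum_single hd hu.convexOn _ v).trans (Finset.sum_le_sum fun i _ => ?_)
        refine mul_le_mul_of_nonneg_left
          (secondDiff_smul_le hu.convexOn _ _ (by positivity) ?_) (by positivity)
        rw [abs_mul, abs_of_pos hd0]
        have := hv i
        gcongr
        linarith
    _ = ∑ i, (d : ℝ)⁻¹ * ∑ k ∈ gridIndex d L,
          secondDiff u (gridCenter d h k) ((d * h) • EuclideanSpace.single i (1 : ℝ)) := by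
        rw [Finset.sum_comm]
        simp only [Finset.mul_sum]
    _ ≤ ∑ _i : Fin d, (d : ℝ)⁻¹ * (2 * (d * L ^ (d - 1) * (d * (d * h)))) :=
        Finset.sum_le_sum fun i _ => mul_le_mul_of_nonneg_left (haxis i) (by positivity)
    _ = L ^ (d - 1) * (2 * d ^ 3 * h) := by
        simp only [Finset.sum_const, Finset.card_univ, Fintype.card_fin, nsmul_eq_mul]
        field_simp
    _ = L ^ (d - 1) * (h * L) * (2 * d ^ 3 * h) := by rw [hL, mul_one]
    _ = L ^ d * (2 * d ^ 3 * h ^ 2) := by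
        obtain ⟨n, rfl⟩ : ∃ n, d = n + 1 := ⟨d - 1, by omega⟩
        rw [Nat.add_sub_cancel, pow_succ]
        ring

end SecondDifference

section Discretization

variable {d : ℕ}

lemma unitCube_subset_closedCube (d : ℕ) : unitCube d ⊆ closedCube d :=
  fun _ hx i => Set.Ioo_subset_Icc_self (hx i)

lemma continuousOn_of_holder {μ : Euc d → ℝ} {s : Set (Euc d)} {α C : ℝ} (hα : 0 < α)
    (hμ : ∀ x ∈ s, ∀ y ∈ s, |μ x - μ y| ≤ C * ‖x - y‖ ^ α) : ContinuousOn μ s := by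
  intro x hx
  rw [ContinuousWithinAt, tendsto_iff_dist_tendsto_zero]
  have hlim : Filter.Tendsto (fun y => C * ‖y - x‖ ^ α) (nhdsWithin x s) (nhds 0) := by
    have hc : Continuous fun y : Euc d => C * ‖y - x‖ ^ α :=
      continuous_const.mul ((by fun_prop : Continuous fun y : Euc d => ‖y - x‖).rpow_const
        fun _ => Or.inr hα.le)
    have := (hc.tendsto x).mono_left (nhdsWithin_le_nhds (s := s))
    simpa [Real.zero_rpow hα.ne'] using this
  refine squeeze_zero' (Filter.Eventually.of_forall fun _ => dist_nonneg) ?_ hlim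
  filter_upwards [self_mem_nhdsWithin] with y hy using hμ y hy x hx

/-- Discretization error for a function with summable second differences on the grid, against a
bounded Hölder density. -/
lemma abs_setIntegral_sub_gridSnap_le (hd : 1 ≤ d) {α C M B : ℝ} (hα0 : 0 < α) (hα1 : α < 1)
    (hC : 0 ≤ C) (hM : 0 ≤ M) (hB : 0 ≤ B) {μ : Euc d → ℝ}
    (hμ : ∀ x ∈ unitCube d, ∀ y ∈ unitCube d, |μ x - μ y| ≤ C * ‖x - y‖ ^ α)
    (hμC : ∀ x ∈ unitCube d, |μ x| ≤ C) {L : ℕ} {h : ℝ} (hh : 0 < h) (hL : h * L = 1)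
    {f : Euc d → ℝ} (hf : Continuous f)
    (hfM : ∀ x ∈ unitCube d, ∀ y ∈ unitCube d, |f x - f y| ≤ M * ‖x - y‖)
    (hfB : ∀ v ∈ centeredBox d h,
      ∑ k ∈ gridIndex d L, |secondDiff f (gridCenter d h k) v| ≤ L ^ d * (B * h ^ 2)) :
    |∫ x in unitCube d, μ x * (f x - f (gridSnap d h x))| ≤
      (C * B + M * d ^ 2 * C) * h ^ (1 + α) := by
  have hd1 : (1 : ℝ) ≤ d := by exact_mod_cast hd
  have hL1 : (1 : ℝ) ≤ L := by
    have : L ≠ 0 := by rintro rfl; simp at hL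
    exact_mod_cast Nat.one_le_iff_ne_zero.2 this
  have hh1 : h ≤ 1 := by nlinarith
  have hpow : h ^ (1 + α) = h * h ^ α := by rw [Real.rpow_add hh, Real.rpow_one]
  have hsq : h ^ 2 ≤ h ^ (1 + α) := by
    rw [← Real.rpow_natCast]
    exact Real.rpow_le_rpow_of_exponent_ge hh hh1 (by push_cast; linarith)
  refine abs_setIntegral_unitCube_le hh hL ?_ fun v hv => ?_
  · obtain ⟨b, hb⟩ := (isCompact_closedCube d).exists_bound_of_continuousOn hf.continuousOn
    have : IsFiniteMeasure (volume.restrict (unitCube d)) := ⟨by simp [volume_unitCube]⟩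
    refine Integrable.of_bound (C := C * (b + b)) ?_ ?_
    · exact ((continuousOn_of_holder hα0 hμ).aestronglyMeasurable (measurableSet_unitCube d)).mul
        (hf.measurable.sub (hf.measurable.comp (measurable_gridSnap d h))).aestronglyMeasurable
    · filter_upwards [ae_restrict_mem (measurableSet_unitCube d)] with x hx
      rw [norm_mul]
      refine mul_le_mul (hμC x hx) ((norm_sub_le _ _).trans (add_le_add ?_ ?_)) (norm_nonneg _) hC
      · exact hb _ (unitCube_subset_closedCube d hx)
      · exact hb _ (gridSnap_mem_closedCube hh hL hx)
  have hterm : ∀ k ∈ gridIndex d L,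
      |μ (gridCenter d h k + v) * (f (gridCenter d h k + v) -
          f (gridSnap d h (gridCenter d h k + v))) +
        μ (gridCenter d h k + -v) * (f (gridCenter d h k + -v) -
          f (gridSnap d h (gridCenter d h k + -v)))| ≤
      C * |secondDiff f (gridCenter d h k) v| + M * d ^ 2 * C * h ^ (1 + α) := by
    intro k hk
    have hv' := neg_mem_centeredBox hv
    have hg1 := gridCenter_add_mem_unitCube hh hL hk hv
    have hg2 := gridCenter_add_mem_unitCube hh hL hk hv'
    have hg0 : gridCenter d h k ∈ unitCube d := by
      simpa using gridCenter_add_mem_unitCube hh hL hk (v := 0) fun i => by simpa using hh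
    rw [gridSnap_gridCenter_add hh k hv, gridSnap_gridCenter_add hh k hv']
    set g := gridCenter d h k
    have hdecomp : μ (g + v) * (f (g + v) - f g) + μ (g + -v) * (f (g + -v) - f g) =
        μ (g + v) * secondDiff f g v + (μ (g + -v) - μ (g + v)) * (f (g + -v) - f g) := by
      rw [secondDiff]; ring
    rw [hdecomp]
    refine (abs_add_le _ _).trans (add_le_add ?_ ?_)
    · rw [abs_mul]
      exact mul_le_mul_of_nonneg_right (hμC _ hg1) (abs_nonneg _)
    · have hn1 : ‖v‖ ≤ d * h := norm_le_of_forall_abs_le hh.le fun i => by linarith [hv i]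
      have hn2 : ‖(g + -v) - (g + v)‖ ≤ d * h := by
        refine norm_le_of_forall_abs_le hh.le fun i => ?_
        have : ((g + -v) - (g + v)) i = -(2 * v i) := by simp; ring
        rw [this, abs_neg, abs_mul, abs_two]
        linarith [hv i]
      have h1 : |μ (g + -v) - μ (g + v)| ≤ C * (d * h ^ α) := by
        refine (hμ _ hg2 _ hg1).trans (mul_le_mul_of_nonneg_left ?_ hC)
        calc ‖(g + -v) - (g + v)‖ ^ α ≤ (d * h) ^ α :=
              Real.rpow_le_rpow (norm_nonneg _) hn2 hα0.le
          _ = d ^ α * h ^ α := Real.mul_rpow (by positivity) hh.le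
          _ ≤ d * h ^ α := by
              gcongr
              exact (Real.rpow_le_rpow_of_exponent_le hd1 hα1.le).trans_eq (Real.rpow_one _)
      have h2 : |f (g + -v) - f g| ≤ M * (d * h) := by
        refine (hfM _ hg2 _ hg0).trans ?_
        simpa using mul_le_mul_of_nonneg_left hn1 hM
      rw [abs_mul]
      calc _ ≤ (C * (d * h ^ α)) * (M * (d * h)) := by gcongr
        _ = _ := by rw [hpow]; ring
  calc _ ≤ ∑ k ∈ gridIndex d L,
        (C * |secondDiff f (gridCenter d h k) v| + M * d ^ 2 * C * h ^ (1 + α)) :=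
        (Finset.abs_sum_le_sum_abs _ _).trans (Finset.sum_le_sum hterm)
    _ = C * ∑ k ∈ gridIndex d L, |secondDiff f (gridCenter d h k) v| +
        L ^ d * (M * d ^ 2 * C * h ^ (1 + α)) := by
        rw [Finset.sum_add_distrib, Finset.mul_sum, Finset.sum_const, card_gridIndex, nsmul_eq_mul,
          Nat.cast_pow]
    _ ≤ C * (L ^ d * (B * h ^ (1 + α))) + L ^ d * (M * d ^ 2 * C * h ^ (1 + α)) := by
        have := hfB v hv
        have : L ^ d * (B * h ^ 2) ≤ L ^ d * (B * h ^ (1 + α)) := by gcongr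
        gcongr
        linarith
    _ = L ^ d * ((C * B + M * d ^ 2 * C) * h ^ (1 + α)) := by ring

lemma abs_norm_sq_sub_le {x y : Euc d} (hx : x ∈ closedCube d) (hy : y ∈ closedCube d) :
    |‖x‖ ^ 2 - ‖y‖ ^ 2| ≤ 2 * d * ‖x - y‖ := by
  have h1 := norm_le_of_mem_closedCube hx
  have h2 := norm_le_of_mem_closedCube hy
  rw [sq_sub_sq, abs_mul, abs_of_nonneg (by positivity : 0 ≤ ‖x‖ + ‖y‖)]
  exact mul_le_mul (by linarith) (abs_norm_sub_norm_le x y) (abs_nonneg _) (by positivity)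

lemma sum_abs_secondDiff_dual_le (hd : 1 ≤ d) {u : Euc d → ℝ} (hu : IsPotential u) {L : ℕ} {h : ℝ}
    (hh : 0 < h) (hL : h * L = 1) {v : Euc d} (hv : v ∈ centeredBox d h) :
    ∑ k ∈ gridIndex d L, |secondDiff (fun x => ‖x‖ ^ 2 - 2 * u x) (gridCenter d h k) v| ≤
      L ^ d * ((2 * d ^ 2 + 4 * d ^ 3) * h ^ 2) := by
  have hn : ‖v‖ ≤ d * h := norm_le_of_forall_abs_le hh.le fun i => by linarith [hv i]
  have hterm : ∀ k ∈ gridIndex d L,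
      |secondDiff (fun x => ‖x‖ ^ 2 - 2 * u x) (gridCenter d h k) v| ≤
        2 * (d * h) ^ 2 + 2 * secondDiff u (gridCenter d h k) v := by
    intro k _
    set g := gridCenter d h k
    have hD := secondDiff_nonneg hu.convexOn g v
    have heq : secondDiff (fun x => ‖x‖ ^ 2 - 2 * u x) g v =
        2 * ‖v‖ ^ 2 + -(2 * secondDiff u g v) := by
      simp only [secondDiff]
      rw [norm_add_sq_real, norm_add_sq_real, inner_neg_right, norm_neg]
      ring
    rw [heq]
    refine (abs_add_le _ _).trans (add_le_add ?_ ?_)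
    · rw [abs_of_nonneg (by positivity)]
      gcongr
    · rw [abs_neg, abs_of_nonneg (by positivity)]
  refine (Finset.sum_le_sum hterm).trans ?_
  rw [Finset.sum_add_distrib, Finset.sum_const, card_gridIndex, nsmul_eq_mul, Nat.cast_pow,
    ← Finset.mul_sum]
  have := hu.sum_secondDiff_le hd hh hL hv
  nlinarith

/-- The constant in the discretization error of the dual functional. -/
def discretizationConst (d : ℕ) (C : ℝ) : ℝ :=
  C * (2 * d ^ 2 + 4 * d ^ 3) + 4 * d * d ^ 2 * C

lemma withDensity_compl_closedCube (ρ : Euc d → ℝ≥0∞) :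
    ((volume.restrict (unitCube d)).withDensity ρ) (closedCube d)ᶜ = 0 := by
  refine withDensity_absolutelyContinuous _ _ ?_
  rw [Measure.restrict_apply (isCompact_closedCube d).isClosed.measurableSet.compl]
  convert measure_empty (μ := (volume : Measure (Euc d)))
  exact Set.disjoint_iff_inter_eq_empty.1
    (disjoint_compl_left.mono_right (unitCube_subset_closedCube d))

lemma map_gridSnap_compl_closedCube (ρ : Euc d → ℝ≥0∞) {L : ℕ} {h : ℝ} (hh : 0 < h)
    (hL : h * L = 1) :
    (((volume.restrict (unitCube d)).withDensity ρ).map (gridSnap d h)) (closedCube d)ᶜ = 0 := by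
  rw [Measure.map_apply (measurable_gridSnap d h)
    (isCompact_closedCube d).isClosed.measurableSet.compl]
  refine withDensity_absolutelyContinuous _ _ ?_
  rw [Measure.restrict_apply ((isCompact_closedCube d).isClosed.measurableSet.compl.preimage
    (measurable_gridSnap d h))]
  convert measure_empty (μ := (volume : Measure (Euc d)))
  refine Set.eq_empty_of_forall_notMem fun x hx => hx.1 (gridSnap_mem_closedCube hh hL hx.2)

lemma abs_integral_dual_sub_map_gridSnap_le (hd : 1 ≤ d) {α C : ℝ} (hα0 : 0 < α) (hα1 : α < 1)
    (hC : 0 ≤ C) {P : Measure (Euc d)} [IsProbabilityMeasure P] {μ : Euc d → ℝ}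
    (hP : P = (volume.restrict (unitCube d)).withDensity (fun x => ENNReal.ofReal (μ x)))
    (hμ : ∀ x ∈ unitCube d, ∀ y ∈ unitCube d, |μ x - μ y| ≤ C * ‖x - y‖ ^ α)
    (hμ0 : ∀ x ∈ unitCube d, 0 ≤ μ x) (hμC : ∀ x ∈ unitCube d, μ x ≤ C)
    {L : ℕ} {h : ℝ} (hh : 0 < h) (hL : h * L = 1) {u : Euc d → ℝ} (hu : IsPotential u) :
    |∫ x, (‖x‖ ^ 2 - 2 * u x) ∂P - ∫ x, (‖x‖ ^ 2 - 2 * u x) ∂(P.map (gridSnap d h))| ≤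
      discretizationConst d C * h ^ (1 + α) := by
  have huc := hu.continuous
  set f : Euc d → ℝ := fun x => ‖x‖ ^ 2 - 2 * u x with hf
  have hfc : Continuous f := by fun_prop
  have hG := measurable_gridSnap d h
  have hprob : IsProbabilityMeasure (P.map (gridSnap d h)) :=
    Measure.isProbabilityMeasure_map hG.aemeasurable
  have hi1 : Integrable f P := integrable_of_isCompact (isCompact_closedCube d)
    (hP ▸ withDensity_compl_closedCube _) hfc
  have hi2 : Integrable f (P.map (gridSnap d h)) := integrable_of_isCompact (isCompact_closedCube d)
    (hP ▸ map_gridSnap_compl_closedCube _ hh hL) hfc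
  have hi3 : Integrable (fun x => f (gridSnap d h x)) P := hi2.comp_measurable hG
  rw [integral_map hG.aemeasurable hfc.aestronglyMeasurable, ← integral_sub hi1 hi3]
  have hmeas : AEMeasurable (fun x => ENNReal.ofReal (μ x)) (volume.restrict (unitCube d)) :=
    ((continuousOn_of_holder hα0 hμ).aemeasurable (measurableSet_unitCube d)).ennreal_ofReal
  rw [hP, integral_withDensity_eq_integral_toReal_smul₀ hmeas (by simp)]
  have hcongr : ∫ x in unitCube d,
      (ENNReal.ofReal (μ x)).toReal • (f x - f (gridSnap d h x)) =
      ∫ x in unitCube d, μ x * (f x - f (gridSnap d h x)) :=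
    setIntegral_congr_fun (measurableSet_unitCube d) fun x hx => by
      simp [ENNReal.toReal_ofReal (hμ0 x hx)]
  rw [hcongr]
  refine abs_setIntegral_sub_gridSnap_le hd hα0 hα1 hC (by positivity) (by positivity) hμ
    (fun x hx => abs_le.2 ⟨by linarith [hμ0 x hx], hμC x hx⟩) hh hL hfc (fun x hx y hy => ?_)
    fun v hv => sum_abs_secondDiff_dual_le hd hu hh hL hv
  have h1 := abs_norm_sq_sub_le (unitCube_subset_closedCube d hx) (unitCube_subset_closedCube d hy)
  have h2 := hu.abs_sub_le x y
  have h3 : f x - f y = (‖x‖ ^ 2 - ‖y‖ ^ 2) + -(2 * (u x - u y)) := by simp only [hf]; ring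
  rw [h3]
  refine (abs_add_le _ _).trans ?_
  rw [abs_neg, abs_mul, abs_two]
  linarith

/-- Comparison of squared distances through near-optimal dual potentials. -/
lemma W2sq_le_W2sq_add {P Q P' Q' : Measure (Euc d)} [IsProbabilityMeasure P]
    [IsProbabilityMeasure Q] [IsProbabilityMeasure P'] [IsProbabilityMeasure Q']
    (hP : P (closedCube d)ᶜ = 0) (hQ : Q (closedCube d)ᶜ = 0)
    (hP' : P' (closedCube d)ᶜ = 0) (hQ' : Q' (closedCube d)ᶜ = 0) {T : ℝ}
    (hPT : ∀ u, IsPotential u →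
      ∫ x, (‖x‖ ^ 2 - 2 * u x) ∂P ≤ ∫ x, (‖x‖ ^ 2 - 2 * u x) ∂P' + T)
    (hQT : ∀ u, IsPotential u →
      ∫ x, (‖x‖ ^ 2 - 2 * u x) ∂Q ≤ ∫ x, (‖x‖ ^ 2 - 2 * u x) ∂Q' + T) :
    W2sq P Q ≤ W2sq P' Q' + 2 * T := by
  refine le_of_forall_pos_le_add fun δ hδ => ?_
  obtain ⟨u, w, hu, hw, huw, hle⟩ := exists_potentials hP hQ hδ
  have h1 := dual_le_W2sq hP' hQ' hu.continuous hw.continuous huw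
  have h2 := hPT u hu
  have h3 := hQT w hw
  linarith

lemma abs_sqrt_sub_sqrt_le {a b ε : ℝ} (ha : 0 ≤ a) (hb : 0 ≤ b) (hε : 0 < ε) (hεb : ε < √b) :
    |√a - √b| ≤ |a - b| / ε := by
  rw [le_div_iff₀ hε]
  have hfac : a - b = (√a - √b) * (√a + √b) := by
    nlinarith [Real.mul_self_sqrt ha, Real.mul_self_sqrt hb]
  rw [hfac, abs_mul]
  refine mul_le_mul_of_nonneg_left ?_ (abs_nonneg _)
  exact (by linarith [Real.sqrt_nonneg a] : ε ≤ √a + √b).trans (le_abs_self _)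

end Discretization

/-- If additionally `W₂(P,Q) > ε > 0`, then
`|W₂(G_h#P, G_h#Q) − W₂(P,Q)| ≤ K h^{1+α} / ε` with `K` depending only on `d, C, α`. -/
theorem grid_discretization_error_W2 (d : ℕ) (hd : 1 ≤ d) (α C : ℝ)
    (hα0 : 0 < α) (hα1 : α < 1) (hC : 1 < C) :
    ∃ K > (0 : ℝ), ∀ P Q : Measure (Euc d),
      IsProbabilityMeasure P → IsProbabilityMeasure Q →
      IsControlled d α C P Q →
      ∀ ε : ℝ, 0 < ε → ε < W2 P Q →
      ∀ h : ℝ, 0 < h → (∃ L : ℕ, 0 < L ∧ h = 1 / L) →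
        |W2 (P.map (gridSnap d h)) (Q.map (gridSnap d h)) - W2 P Q|
          ≤ K * h ^ (1 + α) / ε := by
  have hC0 : 0 < C := by linarith
  have hd0 : (0 : ℝ) < d := by exact_mod_cast hd
  refine ⟨2 * discretizationConst d C, by unfold discretizationConst; positivity, ?_⟩
  rintro P Q hPp hQp ⟨μ, ν, hP, hQ, ⟨Cμ, Cν, hCμ, hCν, hCC, hμ, hν⟩, hμb, hνb⟩ ε hε hεW h hh
    ⟨L, hL0, hhL⟩
  have hL : h * L = 1 := by
    have : (L : ℝ) ≠ 0 := by positivity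
    rw [hhL]; field_simp
  have hG := measurable_gridSnap d h
  have hPG : IsProbabilityMeasure (P.map (gridSnap d h)) :=
    Measure.isProbabilityMeasure_map hG.aemeasurable
  have hQG : IsProbabilityMeasure (Q.map (gridSnap d h)) :=
    Measure.isProbabilityMeasure_map hG.aemeasurable
  have hP0 : P (closedCube d)ᶜ = 0 := hP ▸ withDensity_compl_closedCube _
  have hQ0 : Q (closedCube d)ᶜ = 0 := hQ ▸ withDensity_compl_closedCube _
  have hP1 : (P.map (gridSnap d h)) (closedCube d)ᶜ = 0 :=
    hP ▸ map_gridSnap_compl_closedCube _ hh hL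
  have hQ1 : (Q.map (gridSnap d h)) (closedCube d)ᶜ = 0 :=
    hQ ▸ map_gridSnap_compl_closedCube _ hh hL
  have hPT := fun u (hu : IsPotential u) => abs_sub_le_iff.1 <|
    abs_integral_dual_sub_map_gridSnap_le hd hα0 hα1 hC0.le hP
      (fun x hx y hy => (hμ x hx y hy).trans (by gcongr; linarith))
      (fun x hx => (inv_nonneg.2 hC0.le).trans (hμb x hx).1) (fun x hx => (hμb x hx).2) hh hL hu
  have hQT := fun u (hu : IsPotential u) => abs_sub_le_iff.1 <|
    abs_integral_dual_sub_map_gridSnap_le hd hα0 hα1 hC0.le hQ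
      (fun x hx y hy => (hν x hx y hy).trans (by gcongr; linarith))
      (fun x hx => (inv_nonneg.2 hC0.le).trans (hνb x hx).1) (fun x hx => (hνb x hx).2) hh hL hu
  have h1 := W2sq_le_W2sq_add hP0 hQ0 hP1 hQ1
    (fun u hu => sub_le_iff_le_add'.1 (hPT u hu).1) (fun u hu => sub_le_iff_le_add'.1 (hQT u hu).1)
  have h2 := W2sq_le_W2sq_add hP1 hQ1 hP0 hQ0
    (fun u hu => sub_le_iff_le_add'.1 (hPT u hu).2) (fun u hu => sub_le_iff_le_add'.1 (hQT u hu).2)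
  refine (abs_sqrt_sub_sqrt_le (W2sq_nonneg _ _) (W2sq_nonneg _ _) hε hεW).trans ?_
  gcongr
  exact abs_sub_le_iff.2 ⟨by linarith, by linarith⟩
end
end

section
/- Let d ≥ 1 be an integer, 0 < α < 1 and C > 0. Let C ⊂ (0,1)^d be an axis-aligned cube of side length h > 0 with center c, and let μ : (0,1)^d → ℝ be measurable with α-Hölder seminorm at most C. Then for every w ∈ ℝ^d, |∫_C ⟨x − c, w⟩ μ(x) dx| ≤ K·‖w‖·h^{d+1+α}, where K > 0 depends only on d, C and α, and the integral is with respect to Lebesgue measure. In particular, ∫_C ⟨x − c, w⟩ dx = 0 for every fixed w ∈ ℝ^d. -/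
open MeasureTheory
open scoped ENNReal RealInnerProductSpace

noncomputable section

/-- An axis-aligned open cube of side length `h` centered at `c`. -/
def centeredCube (d : ℕ) (c : Euc d) (h : ℝ) : Set (Euc d) :=
  {x | ∀ i, |x i - c i| < h / 2}

theorem measurableSet_centeredCube (d : ℕ) (c : Euc d) (h : ℝ) :
    MeasurableSet (centeredCube d c h) := by
  have : centeredCube d c h = ⋂ i, {x : Euc d | |x i - c i| < h / 2} := by
    ext x
    simp [centeredCube]
  rw [this]
  refine MeasurableSet.iInter fun i => ?_
  exact (isOpen_lt (by fun_prop) continuous_const).measurableSet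

theorem center_mem_centeredCube (d : ℕ) (c : Euc d) {h : ℝ} (hh : 0 < h) :
    c ∈ centeredCube d c h := by
  intro i
  simpa using hh

theorem volume_centeredCube (d : ℕ) (c : Euc d) {h : ℝ} (hh : 0 < h) :
    volume (centeredCube d c h) = ENNReal.ofReal (h ^ d) := by
  have hpre : centeredCube d c h =
      WithLp.ofLp ⁻¹' Metric.ball (WithLp.ofLp c) (h / 2) := by
    ext x
    simp [centeredCube, dist_pi_lt_iff (half_pos hh), Real.dist_eq]
  rw [hpre, (PiLp.volume_preserving_ofLp (Fin d)).measure_preimage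
    Metric.isOpen_ball.measurableSet.nullMeasurableSet, Real.volume_pi_ball _ (half_pos hh)]
  simp [mul_div_cancel₀]

theorem norm_sub_center_le {d : ℕ} {c x : Euc d} {h : ℝ} (hh : 0 < h)
    (hx : x ∈ centeredCube d c h) : ‖x - c‖ ≤ d * h := by
  rw [EuclideanSpace.norm_eq]
  refine Real.sqrt_le_iff.mpr ⟨by positivity, ?_⟩
  have hterm : ∀ i ∈ Finset.univ, ‖(x - c) i‖ ^ 2 ≤ h ^ 2 := fun i _ => by
    have hi : |x i - c i| < h / 2 := hx i
    refine pow_le_pow_left₀ (norm_nonneg _) ?_ 2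
    rw [PiLp.sub_apply, Real.norm_eq_abs]
    linarith
  have hd : (d : ℝ) ≤ (d : ℝ) ^ 2 := by
    exact_mod_cast Nat.le_self_pow two_ne_zero d
  calc ∑ i, ‖(x - c) i‖ ^ 2 ≤ ∑ _i : Fin d, h ^ 2 := Finset.sum_le_sum hterm
    _ = d * h ^ 2 := by simp
    _ ≤ (d : ℝ) ^ 2 * h ^ 2 := by gcongr
    _ = (d * h) ^ 2 := by ring

/-- The integral changes sign under the reflection `x ↦ 2c - x`, which preserves the cube. -/
theorem setIntegral_centeredCube_inner_sub_center (d : ℕ) (c : Euc d) (h : ℝ) (w : Euc d) :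
    ∫ x in centeredCube d c h, ⟪x - c, w⟫ = 0 := by
  rw [← integral_indicator (measurableSet_centeredCube d c h)]
  set F : Euc d → ℝ := (centeredCube d c h).indicator fun x => ⟪x - c, w⟫ with hF
  have hodd : ∀ x, F (c + c - x) = -F x := fun x => by
    have hmem : c + c - x ∈ centeredCube d c h ↔ x ∈ centeredCube d c h := by
      refine forall_congr' fun i => ?_
      rw [PiLp.sub_apply, PiLp.add_apply, ← abs_neg (x i - c i)]
      ring_nf
    by_cases hx : x ∈ centeredCube d c h
    · rw [hF, Set.indicator_of_mem (hmem.mpr hx), Set.indicator_of_mem hx, ← inner_neg_left]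
      congr 1
      abel
    · rw [hF, Set.indicator_of_notMem (mt hmem.mp hx), Set.indicator_of_notMem hx, neg_zero]
  have hself : ∫ x, F x = -∫ x, F x := by
    rw [← integral_neg, ← integral_sub_left_eq_self F volume (c + c)]
    exact integral_congr_ae (.of_forall hodd)
  linarith

/-- For an axis-aligned cube `C ⊆ (0,1)^d` of side `h` and center `c`,
and `μ` measurable with `α`-Hölder seminorm at most `C` on `(0,1)^d`,
`|∫_C ⟨x − c, w⟩ μ(x) dx| ≤ K ‖w‖ h^{d+1+α}` with `K` depending only on `d, C, α`;
in particular `∫_C ⟨x − c, w⟩ dx = 0`. -/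
theorem cube_linear_cancellation (d : ℕ) (hd : 1 ≤ d) (α C : ℝ)
    (hα0 : 0 < α) (hα1 : α < 1) (hC : 0 < C) :
    ∃ K > (0 : ℝ), ∀ h : ℝ, 0 < h → ∀ c : Euc d,
      centeredCube d c h ⊆ unitCube d →
      ∀ μ : Euc d → ℝ, Measurable μ →
      (∀ x ∈ unitCube d, ∀ y ∈ unitCube d, |μ x - μ y| ≤ C * ‖x - y‖ ^ α) →
      ∀ w : Euc d,
        |(∫ x in centeredCube d c h, ⟪x - c, w⟫ * μ x)|
            ≤ K * ‖w‖ * h ^ ((d : ℝ) + 1 + α) ∧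
        (∫ x in centeredCube d c h, ⟪x - c, w⟫) = 0 := by
  have hd0 : (0 : ℝ) < d := by exact_mod_cast hd
  refine ⟨C * (d * (d : ℝ) ^ α), by positivity, fun h hh c hsub μ hμ hHol w => ?_⟩
  have hzero := setIntegral_centeredCube_inner_sub_center d c h w
  refine ⟨?_, hzero⟩
  set Q := centeredCube d c h
  have hvol : volume Q = ENNReal.ofReal (h ^ d) := volume_centeredCube d c hh
  have hfin : volume Q < ∞ := hvol ▸ ENNReal.ofReal_lt_top
  have hQm : MeasurableSet Q := measurableSet_centeredCube d c h
  have hinner : ∀ x ∈ Q, ‖⟪x - c, w⟫‖ ≤ d * h * ‖w‖ := fun x hx =>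
    (norm_inner_le_norm _ _).trans <| by
      gcongr
      exact norm_sub_center_le hh hx
  have hdiff : ∀ x ∈ Q, ‖μ x - μ c‖ ≤ C * (d * h) ^ α := fun x hx =>
    (hHol x (hsub hx) c (hsub (center_mem_centeredCube d c hh))).trans <| by
      gcongr
      exact norm_sub_center_le hh hx
  have hprod : ∀ x ∈ Q, ‖⟪x - c, w⟫ * (μ x - μ c)‖ ≤ d * h * ‖w‖ * (C * (d * h) ^ α) :=
    fun x hx => by
      rw [norm_mul]
      exact mul_le_mul (hinner x hx) (hdiff x hx) (norm_nonneg _) (by positivity)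
  have hint_inner : IntegrableOn (fun x => ⟪x - c, w⟫) Q :=
    IntegrableOn.of_bound hfin (by fun_prop) _ (ae_restrict_of_forall_mem hQm hinner)
  have hint_prod : IntegrableOn (fun x => ⟪x - c, w⟫ * (μ x - μ c)) Q :=
    IntegrableOn.of_bound hfin (by fun_prop) _ (ae_restrict_of_forall_mem hQm hprod)
  have hcancel : ∫ x in Q, ⟪x - c, w⟫ * μ x = ∫ x in Q, ⟪x - c, w⟫ * (μ x - μ c) := by
    calc ∫ x in Q, ⟪x - c, w⟫ * μ x
        = ∫ x in Q, (⟪x - c, w⟫ * (μ x - μ c) + ⟪x - c, w⟫ * μ c) := by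
          congr 1 with x
          ring
      _ = ∫ x in Q, ⟪x - c, w⟫ * (μ x - μ c) := by
          rw [integral_add hint_prod (hint_inner.mul_const _), integral_mul_const, hzero,
            zero_mul, add_zero]
  rw [hcancel, ← Real.norm_eq_abs]
  refine (norm_setIntegral_le_of_norm_le_const hfin hprod).trans_eq ?_
  rw [measureReal_def, hvol, ENNReal.toReal_ofReal (by positivity),
    Real.mul_rpow hd0.le hh.le, Real.rpow_add hh, Real.rpow_add hh, Real.rpow_natCast,
    Real.rpow_one]
  ring
end
end
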